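/- Let μ be a (K,d)-doubling Borel measure on a metric space (M,ρ) endowed with a Christ dyadic cube system with parameter δ ∈ (0,1) and with the level-j₀ subcube families. Let s ∈ ℝ, τ ∈ [0,∞), p ∈ (0,∞) and q ∈ (0,∞]. Then there exists a constant C ≥ 1 such that for every family a = {a_t^{j,ν}}_{j∈ℤ₊, t∈I_j, 1≤ν≤N_t^j} of complex numbers: ‖a‖_{b̃^{s+dτ−d/p}_{∞,∞}} ≤ C·‖a‖_{f̃^{s,τ}_{p,q}}. -/

import Mathlib

open MeasureTheory Metric
open scoped ENNReal

/-- A Christ dyadic cube system on a metric measure space `(M, ρ, μ)`. -/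
structure ChristSystem (M : Type*) [MetricSpace M] [MeasurableSpace M] (μ : Measure M) where
  δ : ℝ
  δ_pos : 0 < δ
  δ_lt_one : δ < 1
  cSmall : ℝ
  cBig : ℝ
  cSmall_pos : 0 < cSmall
  cSmall_lt_cBig : cSmall < cBig
  I : ℤ → Type
  countable_I : ∀ j : ℤ, Countable (I j)
  Q : (j : ℤ) → I j → Set M
  center : (j : ℤ) → I j → M
  isOpen_Q : ∀ (j : ℤ) (α : I j), IsOpen (Q j α)
  cover : ∀ j : ℤ, μ (Set.univ \ ⋃ α : I j, Q j α) = 0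
  disjoint_Q : ∀ (j : ℤ) (α β : I j), α ≠ β → Q j α ∩ Q j β = ∅
  nested : ∀ (j ℓ : ℤ), j ≤ ℓ → ∀ (α : I j) (β : I ℓ), Q ℓ β ⊆ Q j α ∨ Q ℓ β ∩ Q j α = ∅
  parent : ∀ (j : ℤ) (α : I j) (ℓ : ℤ), ℓ < j → ∃! β : I ℓ, Q j α ⊆ Q ℓ β
  diam_le : ∀ (j : ℤ) (α : I j), EMetric.diam (Q j α) ≤ ENNReal.ofReal (cBig * δ ^ j)
  ball_subset : ∀ (j : ℤ) (α : I j), ball (center j α) (cSmall * δ ^ j) ⊆ Q j α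

/-- The `ℓ^q` norm (with `q ∈ (0,∞]`, usual modification when `q = ∞`) of a
sequence of extended nonnegative reals. -/
noncomputable def seqLq (q : ℝ≥0∞) (a : ℕ → ℝ≥0∞) : ℝ≥0∞ :=
  if q = ⊤ then ⨆ j, a j else (∑' j, a j ^ q.toReal) ^ (1 / q.toReal)

/-- The `L^p` quantity `(∫_A g^p dμ)^{1/p}` (ess sup over `A` when `p = ∞`) for a
nonnegative function `g`. -/
noncomputable def lpOn {M : Type*} [MetricSpace M] [MeasurableSpace M]
    (μ : Measure M) (p : ℝ≥0∞) (A : Set M) (g : M → ℝ≥0∞) : ℝ≥0∞ :=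
  if p = ⊤ then essSup g (μ.restrict A)
  else (∫⁻ x in A, g x ^ p.toReal ∂μ) ^ (1 / p.toReal)

/-- The `ℓ^q(L^p_τ)` norm of a sequence of nonnegative functions:
`sup_{k ∈ ℤ, α ∈ I_k} μ(Q_α^k)^{-τ} ( ∑_{j = max(k,0)}^∞ ( ∫_{Q_α^k} g_j^p dμ )^{q/p} )^{1/q}`. -/
noncomputable def bNorm {M : Type*} [MetricSpace M] [MeasurableSpace M] {μ : Measure M}
    (S : ChristSystem M μ) (p q : ℝ≥0∞) (τ : ℝ) (g : ℕ → M → ℝ≥0∞) : ℝ≥0∞ :=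
  ⨆ (k : ℤ) (α : S.I k), μ (S.Q k α) ^ (-τ) *
    seqLq q (fun j => if k.toNat ≤ j then lpOn μ p (S.Q k α) (g j) else 0)

/-- The `L^p_τ(ℓ^q)` norm of a sequence of nonnegative functions:
`sup_{k ∈ ℤ, α ∈ I_k} μ(Q_α^k)^{-τ} ( ∫_{Q_α^k} ( ∑_{j = max(k,0)}^∞ g_j^q )^{p/q} dμ )^{1/p}`. -/
noncomputable def fNorm {M : Type*} [MetricSpace M] [MeasurableSpace M] {μ : Measure M}
    (S : ChristSystem M μ) (p q : ℝ≥0∞) (τ : ℝ) (g : ℕ → M → ℝ≥0∞) : ℝ≥0∞ :=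
  ⨆ (k : ℤ) (α : S.I k), μ (S.Q k α) ^ (-τ) *
    lpOn μ p (S.Q k α) (fun x => seqLq q (fun j => if k.toNat ≤ j then g j x else 0))

/-- The index type of the level-`(j+j₀)` subcubes of the cube `Q_t^j`. -/
def SubIdx {M : Type*} [MetricSpace M] [MeasurableSpace M] {μ : Measure M}
    (S : ChristSystem M μ) (j₀ : ℕ) (j : ℕ) (t : S.I j) : Type :=
  {β : S.I ((j : ℤ) + j₀) // S.Q ((j : ℤ) + j₀) β ⊆ S.Q (j : ℤ) t}

/-- The subcube `Q_t^{j,ν}`. -/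
def SubQ {M : Type*} [MetricSpace M] [MeasurableSpace M] {μ : Measure M}
    (S : ChristSystem M μ) (j₀ : ℕ) (j : ℕ) (t : S.I j) (ν : SubIdx S j₀ j t) : Set M :=
  S.Q ((j : ℤ) + j₀) ν.1

/-- The level-`j` function `x ↦ ∑_{t ∈ I_j} ∑_{ν} w_t^{j,ν} |a_t^{j,ν}| χ_{E_t^{j,ν}}(x)`
associated with a coefficient family `a`, a weight family `w` and a family of sets `E`. -/
noncomputable def seqFunOn {M : Type*} [MetricSpace M] [MeasurableSpace M] {μ : Measure M}
    (S : ChristSystem M μ) (j₀ : ℕ)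
    (w : (j : ℕ) → (t : S.I j) → SubIdx S j₀ j t → ℝ≥0∞)
    (E : (j : ℕ) → (t : S.I j) → SubIdx S j₀ j t → Set M)
    (a : (j : ℕ) → (t : S.I j) → SubIdx S j₀ j t → ℂ) (j : ℕ) (x : M) : ℝ≥0∞ :=
  ∑' (t : S.I j) (ν : SubIdx S j₀ j t),
    w j t ν * (‖a j t ν‖₊ : ℝ≥0∞) * (E j t ν).indicator (fun _ => (1 : ℝ≥0∞)) x

/-- The level-`j` function `x ↦ ∑_{t ∈ I_j} ∑_{ν} w_t^{j,ν} |a_t^{j,ν}| χ_{Q_t^{j,ν}}(x)`. -/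
noncomputable def seqFun {M : Type*} [MetricSpace M] [MeasurableSpace M] {μ : Measure M}
    (S : ChristSystem M μ) (j₀ : ℕ)
    (w : (j : ℕ) → (t : S.I j) → SubIdx S j₀ j t → ℝ≥0∞)
    (a : (j : ℕ) → (t : S.I j) → SubIdx S j₀ j t → ℂ) (j : ℕ) (x : M) : ℝ≥0∞ :=
  seqFunOn S j₀ w (fun j t ν => SubQ S j₀ j t ν) a j x

/-- The weight `δ^{-js}` used for the sequence spaces `b^{s,τ}_{p,q}` and `f^{s,τ}_{p,q}`. -/
noncomputable def deltaWeight {M : Type*} [MetricSpace M] [MeasurableSpace M] {μ : Measure M}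
    (S : ChristSystem M μ) (j₀ : ℕ) (s : ℝ) :
    (j : ℕ) → (t : S.I j) → SubIdx S j₀ j t → ℝ≥0∞ :=
  fun j _ _ => ENNReal.ofReal (S.δ ^ (-(j : ℝ) * s))

/-- The weight `μ(Q_t^{j,ν})^{-s/d}` used for the sequence spaces `b̃^{s,τ}_{p,q}`
and `f̃^{s,τ}_{p,q}`. -/
noncomputable def tildeWeight {M : Type*} [MetricSpace M] [MeasurableSpace M] {μ : Measure M}
    (S : ChristSystem M μ) (j₀ : ℕ) (d s : ℝ) :
    (j : ℕ) → (t : S.I j) → SubIdx S j₀ j t → ℝ≥0∞ :=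
  fun j t ν => μ (SubQ S j₀ j t ν) ^ (-(s / d))

/-! At every point at most one subcube contributes to the level-`j` function, so it suffices to
bound a single coefficient `a_t^{j,ν}`. With `P = Q_t^{j,ν}` and `Q = Q_t^j`, testing the supremum
in the `f̃`-norm on `Q` and restricting the integral to `P` gives
`μ(Q)^{-τ} μ(P)^{-s/d} |a_t^{j,ν}| μ(P)^{1/p} ≤ ‖a‖_{f̃}`. By doubling, `μ(P)` and `μ(Q)` are
comparable with a constant independent of `j`, `t` and `ν`, so `μ(Q)^{-τ}` may be replaced by
`μ(P)^{-τ}`, and the powers of `μ(P)` combine to the weight of the `b̃`-norm. -/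

theorem rpow_le_rpow_abs_mul_rpow {u v D : ℝ≥0∞} (hD₀ : D ≠ 0) (hD : D ≠ ⊤) (huv : u ≤ D * v)
    (hvu : v ≤ D * u) (σ : ℝ) : u ^ σ ≤ D ^ |σ| * v ^ σ := by
  rcases le_or_gt 0 σ with hσ | hσ
  · rw [abs_of_nonneg hσ, ← ENNReal.mul_rpow_of_nonneg _ _ hσ]
    exact ENNReal.rpow_le_rpow huv hσ
  · have hD_pow_ne_zero : D ^ |σ| ≠ 0 := (ENNReal.rpow_pos hD₀.bot_lt hD).ne'
    have hD_pow_ne_top : D ^ |σ| ≠ ⊤ := ENNReal.rpow_ne_top_of_nonneg (abs_nonneg σ) hD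
    have hpow : v ^ |σ| ≤ D ^ |σ| * u ^ |σ| := by
      rw [← ENNReal.mul_rpow_of_nonneg _ _ (abs_nonneg σ)]
      exact ENNReal.rpow_le_rpow hvu (abs_nonneg σ)
    have hinv (w : ℝ≥0∞) : w ^ σ = (w ^ |σ|)⁻¹ := by
      rw [abs_of_neg hσ, ENNReal.rpow_neg, inv_inv]
    calc u ^ σ = D ^ |σ| * (D ^ |σ| * u ^ |σ|)⁻¹ := by
          rw [ENNReal.mul_inv (.inl hD_pow_ne_zero) (.inl hD_pow_ne_top), ← mul_assoc,
            ENNReal.mul_inv_cancel hD_pow_ne_zero hD_pow_ne_top, one_mul, hinv]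
      _ ≤ D ^ |σ| * v ^ σ := by
          rw [hinv v]
          gcongr

theorem le_seqLq {q : ℝ≥0∞} (hq : q ≠ 0) (b : ℕ → ℝ≥0∞) (j : ℕ) : b j ≤ seqLq q b := by
  unfold seqLq
  split_ifs with hq_top
  · exact le_iSup b j
  · have hq_pos : 0 < q.toReal := ENNReal.toReal_pos hq hq_top
    calc b j = (b j ^ q.toReal) ^ (1 / q.toReal) := by
          rw [one_div, ENNReal.rpow_rpow_inv hq_pos.ne']
      _ ≤ (∑' i, b i ^ q.toReal) ^ (1 / q.toReal) :=
          ENNReal.rpow_le_rpow (ENNReal.le_tsum j) (by positivity)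

section

variable {M : Type*} [MetricSpace M] [MeasurableSpace M] {μ : Measure M}

theorem mul_measure_rpow_le_lpOn {p c : ℝ≥0∞} (hp : p ≠ 0) {A P : Set M}
    (hP : MeasurableSet P) (hμP : μ P ≠ 0) (hPA : P ⊆ A) {g : M → ℝ≥0∞}
    (hg : ∀ x ∈ P, c ≤ g x) : c * μ P ^ (p⁻¹).toReal ≤ lpOn μ p A g := by
  unfold lpOn
  split_ifs with hp_top
  · calc c * μ P ^ (p⁻¹).toReal = essSup (fun _ => c) (μ.restrict P) := by
          rw [essSup_const c (by rwa [Ne, Measure.restrict_eq_zero])]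
          simp [hp_top]
      _ ≤ essSup g (μ.restrict P) :=
          essSup_mono_ae (ae_restrict_of_forall_mem hP hg)
      _ ≤ essSup g (μ.restrict A) :=
          essSup_mono_measure' (Measure.restrict_mono_set μ hPA)
  · have hp_pos : 0 < p.toReal := ENNReal.toReal_pos hp hp_top
    calc c * μ P ^ (p⁻¹).toReal = (∫⁻ _ in P, c ^ p.toReal ∂μ) ^ (1 / p.toReal) := by
          rw [setLIntegral_const, ENNReal.mul_rpow_of_nonneg _ _ (by positivity), one_div,
            ENNReal.rpow_rpow_inv hp_pos.ne', ENNReal.toReal_inv]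
      _ ≤ (∫⁻ x in P, g x ^ p.toReal ∂μ) ^ (1 / p.toReal) := by
          gcongr ?_ ^ _
          exact setLIntegral_mono' hP fun x hx => ENNReal.rpow_le_rpow (hg x hx) hp_pos.le
      _ ≤ (∫⁻ x in A, g x ^ p.toReal ∂μ) ^ (1 / p.toReal) := by
          gcongr

variable (S : ChristSystem M μ)

theorem le_fNorm {p q c : ℝ≥0∞} (hp : p ≠ 0) (hq : q ≠ 0) (τ : ℝ) {j : ℕ} (t : S.I j) {P : Set M}
    (hP : MeasurableSet P) (hμP : μ P ≠ 0) (hPQ : P ⊆ S.Q j t) {g : ℕ → M → ℝ≥0∞}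
    (hg : ∀ x ∈ P, c ≤ g j x) :
    μ (S.Q j t) ^ (-τ) * (c * μ P ^ (p⁻¹).toReal) ≤ fNorm S p q τ g := by
  refine le_trans ?_ (le_iSup₂ (j : ℤ) t)
  gcongr
  refine mul_measure_rpow_le_lpOn hp hP hμP hPQ fun x hx => (hg x hx).trans ?_
  simpa using le_seqLq hq (fun i => if (j : ℤ).toNat ≤ i then g i x else 0) j

namespace ChristSystem

theorem innerRadius_pos (j : ℤ) : 0 < S.cSmall * S.δ ^ j :=
  mul_pos S.cSmall_pos (zpow_pos S.δ_pos j)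

theorem diamBound_pos (j : ℤ) : 0 < S.cBig * S.δ ^ j :=
  mul_pos (S.cSmall_pos.trans S.cSmall_lt_cBig) (zpow_pos S.δ_pos j)

theorem center_mem (j : ℤ) (α : S.I j) : S.center j α ∈ S.Q j α :=
  S.ball_subset j α (mem_ball_self (S.innerRadius_pos j))

theorem Q_subset_ball {j : ℤ} {α : S.I j} {x : M} (hx : x ∈ S.Q j α) :
    S.Q j α ⊆ ball x (2 * (S.cBig * S.δ ^ j)) := by
  intro y hy
  have hdist : dist y x ≤ S.cBig * S.δ ^ j := by
    rw [← ENNReal.ofReal_le_ofReal_iff (S.diamBound_pos j).le, ← edist_dist]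
    exact (Metric.edist_le_ediam_of_mem hy hx).trans (S.diam_le j α)
  rw [mem_ball]
  linarith [S.diamBound_pos j]

theorem measure_Q_ne_zero (hpos : ∀ (x : M) (r : ℝ), 0 < r → 0 < μ (ball x r)) (j : ℤ)
    (α : S.I j) : μ (S.Q j α) ≠ 0 :=
  ((hpos _ _ (S.innerRadius_pos j)).trans_le (measure_mono (S.ball_subset j α))).ne'

theorem measure_Q_ne_top (hfin : ∀ (x : M) (r : ℝ), 0 < r → μ (ball x r) < ⊤) (j : ℤ)
    (α : S.I j) : μ (S.Q j α) ≠ ⊤ :=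
  measure_ne_top_of_subset (S.Q_subset_ball (S.center_mem j α))
    (hfin _ _ (mul_pos two_pos (S.diamBound_pos j))).ne

/-- The factor by which the ball inscribed in a level-`(j+n)` cube is dilated so as to contain
every level-`j` cube around it. It is twice the ratio of the radii, since the balls are open. -/
noncomputable def dilation (n : ℕ) : ℝ :=
  2 * S.cBig / (S.cSmall * S.δ ^ n)

theorem one_le_dilation (n : ℕ) : 1 ≤ S.dilation n := by
  have hcSmall := S.cSmall_pos
  have hcBig := S.cSmall_lt_cBig
  have hδ_pow : S.δ ^ n ≤ 1 := pow_le_one₀ S.δ_pos.le S.δ_lt_one.le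
  rw [dilation, one_le_div (mul_pos hcSmall (pow_pos S.δ_pos n))]
  calc S.cSmall * S.δ ^ n ≤ S.cSmall := mul_le_of_le_one_right hcSmall.le hδ_pow
    _ ≤ 2 * S.cBig := by linarith

theorem dilation_mul_innerRadius (j : ℤ) (n : ℕ) :
    S.dilation n * (S.cSmall * S.δ ^ (j + n)) = 2 * (S.cBig * S.δ ^ j) := by
  have hcSmall := S.cSmall_pos.ne'
  have hδ := S.δ_pos.ne'
  rw [dilation, zpow_add₀ hδ, zpow_natCast]
  field_simp

variable {S}

theorem Q_subset_ball_dilation {j : ℤ} {n : ℕ} {α : S.I j} {β : S.I (j + n)}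
    (hβα : S.Q (j + n) β ⊆ S.Q j α) :
    S.Q j α ⊆ ball (S.center (j + n) β) (S.dilation n * (S.cSmall * S.δ ^ (j + n))) := by
  rw [S.dilation_mul_innerRadius]
  exact S.Q_subset_ball (hβα (S.center_mem _ β))

theorem measure_Q_le_mul_measure_Q_add {n : ℕ} {D : ℝ≥0∞}
    (hD : ∀ (x : M) (r : ℝ), 0 < r → μ (ball x (S.dilation n * r)) ≤ D * μ (ball x r))
    {j : ℤ} {α : S.I j} {β : S.I (j + n)} (hβα : S.Q (j + n) β ⊆ S.Q j α) :
    μ (S.Q j α) ≤ D * μ (S.Q (j + n) β) :=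
  calc μ (S.Q j α)
      ≤ μ (ball (S.center (j + n) β) (S.dilation n * (S.cSmall * S.δ ^ (j + n)))) :=
        measure_mono (Q_subset_ball_dilation hβα)
    _ ≤ D * μ (ball (S.center (j + n) β) (S.cSmall * S.δ ^ (j + n))) :=
        hD _ _ (S.innerRadius_pos _)
    _ ≤ D * μ (S.Q (j + n) β) := by
        gcongr
        exact S.ball_subset _ β

theorem measure_Q_rpow_le {n : ℕ} {D : ℝ≥0∞} (hD_one : 1 ≤ D) (hD_top : D ≠ ⊤)
    (hD : ∀ (x : M) (r : ℝ), 0 < r → μ (ball x (S.dilation n * r)) ≤ D * μ (ball x r))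
    {j : ℤ} {α : S.I j} {β : S.I (j + n)} (hβα : S.Q (j + n) β ⊆ S.Q j α) (σ : ℝ) :
    μ (S.Q (j + n) β) ^ σ ≤ D ^ |σ| * μ (S.Q j α) ^ σ :=
  rpow_le_rpow_abs_mul_rpow (zero_lt_one.trans_le hD_one).ne' hD_top
    ((measure_mono hβα).trans (le_mul_of_one_le_left' hD_one))
    (measure_Q_le_mul_measure_Q_add hD hβα) σ

theorem eq_of_mem_Q {j : ℤ} {α β : S.I j} {x : M} (hα : x ∈ S.Q j α) (hβ : x ∈ S.Q j β) :
    α = β := by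
  by_contra hne
  exact (S.disjoint_Q j α β hne).subset ⟨hα, hβ⟩

end ChristSystem

variable {S} {j₀ j : ℕ} {t : S.I j} {ν : SubIdx S j₀ j t}
  {w : (j : ℕ) → (t : S.I j) → SubIdx S j₀ j t → ℝ≥0∞}
  {a : (j : ℕ) → (t : S.I j) → SubIdx S j₀ j t → ℂ}

theorem seqFun_of_mem_SubQ {x : M} (hx : x ∈ SubQ S j₀ j t ν) :
    seqFun S j₀ w a j x = w j t ν * ‖a j t ν‖₊ := by
  unfold seqFun seqFunOn
  rw [tsum_eq_single t, tsum_eq_single ν]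
  · simp [hx]
  · intro κ hκ
    have hxκ : x ∉ SubQ S j₀ j t κ := fun h =>
      hκ (Subtype.ext (ChristSystem.eq_of_mem_Q h hx))
    simp [hxκ]
  · intro u hu
    have hxu (κ : SubIdx S j₀ j u) : x ∉ SubQ S j₀ j u κ := fun h =>
      hu (ChristSystem.eq_of_mem_Q (κ.2 h) (ν.2 hx))
    simp [hxu]

theorem seqFun_eq_zero_of_forall_notMem {x : M}
    (hx : ∀ (t : S.I j) (ν : SubIdx S j₀ j t), x ∉ SubQ S j₀ j t ν) :
    seqFun S j₀ w a j x = 0 := by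
  simp [seqFun, seqFunOn, hx]

theorem seqFun_le {B : ℝ≥0∞}
    (hB : ∀ (t : S.I j) (ν : SubIdx S j₀ j t), w j t ν * ‖a j t ν‖₊ ≤ B) (x : M) :
    seqFun S j₀ w a j x ≤ B := by
  by_cases hx : ∃ (t : S.I j) (ν : SubIdx S j₀ j t), x ∈ SubQ S j₀ j t ν
  · obtain ⟨t, ν, hxν⟩ := hx
    exact (seqFun_of_mem_SubQ hxν).trans_le (hB t ν)
  · push Not at hx
    exact (seqFun_eq_zero_of_forall_notMem hx).trans_le zero_le

theorem coeff_le_fNorm_seqFun [OpensMeasurableSpace M] {p q : ℝ≥0∞} (hp : p ≠ 0) (hq : q ≠ 0)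
    (τ : ℝ) (hμ : μ (SubQ S j₀ j t ν) ≠ 0) :
    μ (S.Q j t) ^ (-τ) * (w j t ν * ‖a j t ν‖₊ * μ (SubQ S j₀ j t ν) ^ (p⁻¹).toReal)
      ≤ fNorm S p q τ (seqFun S j₀ w a) :=
  le_fNorm S hp hq τ t (S.isOpen_Q _ ν.1).measurableSet hμ ν.2 fun _ hx =>
    (seqFun_of_mem_SubQ hx).ge

theorem tildeWeight_add_mul {d : ℝ} (hd : d ≠ 0) (hμ₀ : μ (SubQ S j₀ j t ν) ≠ 0)
    (hμ : μ (SubQ S j₀ j t ν) ≠ ⊤) (s σ : ℝ) :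
    tildeWeight S j₀ d (s + d * σ) j t ν
      = tildeWeight S j₀ d s j t ν * μ (SubQ S j₀ j t ν) ^ (-σ) := by
  rw [tildeWeight, tildeWeight, ← ENNReal.rpow_add _ _ hμ₀ hμ, add_div,
    mul_div_cancel_left₀ σ hd, neg_add]

theorem tildeWeight_mul_le_fNorm [OpensMeasurableSpace M]
    (hball : ∀ (x : M) (r : ℝ), 0 < r → 0 < μ (ball x r) ∧ μ (ball x r) < ⊤)
    {D : ℝ≥0∞} (hD_one : 1 ≤ D) (hD_top : D ≠ ⊤)
    (hD : ∀ (x : M) (r : ℝ), 0 < r → μ (ball x (S.dilation j₀ * r)) ≤ D * μ (ball x r))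
    {p q : ℝ≥0∞} (hp : p ≠ 0) (hq : q ≠ 0) {d : ℝ} (hd : d ≠ 0) (s τ : ℝ) :
    tildeWeight S j₀ d (s + d * τ - d * (p⁻¹).toReal) j t ν * ‖a j t ν‖₊
      ≤ D ^ |τ| * fNorm S p q τ (seqFun S j₀ (tildeWeight S j₀ d s) a) := by
  set P := SubQ S j₀ j t ν
  have hμ₀ : μ P ≠ 0 := S.measure_Q_ne_zero (fun x r hr => (hball x r hr).1) _ ν.1
  have hμ : μ P ≠ ⊤ := S.measure_Q_ne_top (fun x r hr => (hball x r hr).2) _ ν.1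
  have hμτ : μ P ^ (-τ) ≤ D ^ |τ| * μ (S.Q j t) ^ (-τ) :=
    abs_neg τ ▸ ChristSystem.measure_Q_rpow_le hD_one hD_top hD ν.2 (-τ)
  calc tildeWeight S j₀ d (s + d * τ - d * (p⁻¹).toReal) j t ν * ‖a j t ν‖₊
      = μ P ^ (-τ) * (tildeWeight S j₀ d s j t ν * ‖a j t ν‖₊ * μ P ^ (p⁻¹).toReal) := by
        rw [sub_eq_add_neg, ← mul_neg, tildeWeight_add_mul hd hμ₀ hμ,
          tildeWeight_add_mul hd hμ₀ hμ, neg_neg]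
        ring
    _ ≤ D ^ |τ| * μ (S.Q j t) ^ (-τ)
          * (tildeWeight S j₀ d s j t ν * ‖a j t ν‖₊ * μ P ^ (p⁻¹).toReal) := by
        gcongr
    _ ≤ D ^ |τ| * fNorm S p q τ (seqFun S j₀ (tildeWeight S j₀ d s) a) := by
        rw [mul_assoc]
        gcongr
        exact coeff_le_fNorm_seqFun hp hq τ hμ₀

end

theorem stmt_15_general {M : Type*} [MetricSpace M] [MeasurableSpace M] [OpensMeasurableSpace M]
    (μ : Measure M)
    (hball : ∀ (x : M) (r : ℝ), 0 < r → 0 < μ (ball x r) ∧ μ (ball x r) < ⊤)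
    (K d : ℝ) (hd : d ≠ 0)
    (hdoub : ∀ (x : M) (r lam : ℝ), 0 < r → 1 ≤ lam →
      μ (ball x (lam * r)) ≤ ENNReal.ofReal (K * lam ^ d) * μ (ball x r))
    (S : ChristSystem M μ) (j₀ : ℕ) (τ : ℝ) :
    ∃ C : ℝ, 1 ≤ C ∧ ∀ (s : ℝ) (p q : ℝ≥0∞), p ≠ 0 → q ≠ 0 →
      ∀ a : (j : ℕ) → (t : S.I j) → SubIdx S j₀ j t → ℂ,
        (⨆ (j : ℕ) (x : M),
            seqFun S j₀ (tildeWeight S j₀ d (s + d * τ - d * (p⁻¹).toReal)) a j x)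
          ≤ ENNReal.ofReal C * fNorm S p q τ (seqFun S j₀ (tildeWeight S j₀ d s) a) := by
  set D : ℝ := max 1 (K * S.dilation j₀ ^ d)
  have hD_one : 1 ≤ D := le_max_left _ _
  have hD (x : M) (r : ℝ) (hr : 0 < r) :
      μ (ball x (S.dilation j₀ * r)) ≤ ENNReal.ofReal D * μ (ball x r) :=
    (hdoub x r _ hr (S.one_le_dilation j₀)).trans (by gcongr; exact le_max_right _ _)
  refine ⟨D ^ |τ|, Real.one_le_rpow hD_one (abs_nonneg τ), fun s p q hp hq a => ?_⟩
  rw [← ENNReal.ofReal_rpow_of_nonneg (zero_le_one.trans hD_one) (abs_nonneg τ)]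
  exact iSup₂_le fun _ x => seqFun_le (fun _ _ => tildeWeight_mul_le_fNorm hball
    (ENNReal.one_le_ofReal.2 hD_one) ENNReal.ofReal_ne_top hD hp hq hd s τ) x

theorem stmt_15 {M : Type*} [MetricSpace M] [MeasurableSpace M] [BorelSpace M]
    (μ : Measure M)
    (hball : ∀ (x : M) (r : ℝ), 0 < r → 0 < μ (ball x r) ∧ μ (ball x r) < ⊤)
    (K d : ℝ) (hK : 1 < K) (hd : d = Real.logb 2 K)
    (hdoub : ∀ (x : M) (r lam : ℝ), 0 < r → 1 ≤ lam →
      μ (ball x (lam * r)) ≤ ENNReal.ofReal (K * lam ^ d) * μ (ball x r))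
    (S : ChristSystem M μ) (j₀ : ℕ)
    (hfin : ∀ (j : ℕ) (t : S.I j), Finite (SubIdx S j₀ j t))
    (s τ : ℝ) (hτ : 0 ≤ τ)
    (p q : ℝ≥0∞) (hp0 : 0 < p) (hpt : p ≠ ⊤) (hq : 0 < q) :
    ∃ C : ℝ, 1 ≤ C ∧
      ∀ a : (j : ℕ) → (t : S.I j) → SubIdx S j₀ j t → ℂ,
        (⨆ (j : ℕ) (x : M),
            seqFun S j₀ (tildeWeight S j₀ d (s + d * τ - d / p.toReal)) a j x)
          ≤ ENNReal.ofReal C * fNorm S p q τ (seqFun S j₀ (tildeWeight S j₀ d s) a) := by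
  obtain ⟨C, hC, hbound⟩ := stmt_15_general μ hball K d
    (hd ▸ (Real.logb_pos one_lt_two hK).ne') hdoub S j₀ τ
  exact ⟨C, hC, by simpa [div_eq_mul_inv] using hbound s p q hp0.ne' hq.ne'⟩
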